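/- arXiv:1505.00275 — 2 statements merged into one kernel-verified Lean document; each statement's English description precedes it below -/
import Mathlib

section
/- Let a_K > 0 and let ã ≤ −a_K < a_K ≤ b̃ be real numbers. Let K : ℝ → ℝ be even, integrable, and satisfy K(u) = 0 for all |u| ≥ a_K. Let P_0,…,P_M be real polynomials with deg P_k = k exactly, P_0 identically equal to 1, parity P_k(−u) = (−1)^k P_k(u) for all u, and ∫_{ã}^{b̃} P_j(y) P_k(y) K(y) dy = δ_{jk} for all 0 ≤ j, k ≤ M. Define the step-taper effective kernel K_eff(u) = ∑_{k=0}^{M} P_k(0) P_k(−u) K(−u). Then the moments μ_j(K_eff) = ∫_ℝ u^j K_eff(u) du satisfy: μ_0(K_eff) = 1; μ_j(K_eff) = 0 for all 1 ≤ j ≤ M; and if M is even then additionally μ_{M+1}(K_eff) = 0. Consequently K_eff is a high-order kernel of order at least M+1 when M is odd and of order at least M+2 when M is even. -/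
open MeasureTheory Polynomial Finset

theorem aux_integrable (aK : ℝ) (K : ℝ → ℝ) (hKint : Integrable K)
    (hKsupp : ∀ u, aK ≤ |u| → K u = 0) (q : Polynomial ℝ) :
    Integrable (fun y => q.eval y * K y) := by
  have h : IntegrableOn (fun y => q.eval y * K y) (Set.Icc (-aK) aK) :=
    IntegrableOn.continuousOn_mul q.continuous.continuousOn hKint.integrableOn isCompact_Icc
  refine h.integrable_of_forall_notMem_eq_zero ?_
  intro x hx
  have : aK ≤ |x| := by
    by_contra hc
    push Not at hc
    exact hx ⟨(abs_lt.1 hc).1.le, (abs_lt.1 hc).2.le⟩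
  rw [hKsupp x this, mul_zero]

theorem aux_interval (aK atil btil : ℝ) (haK : 0 < aK) (ha : atil ≤ -aK) (hb : aK ≤ btil)
    (K : ℝ → ℝ) (hKsupp : ∀ u, aK ≤ |u| → K u = 0) (f : ℝ → ℝ) :
    ∫ y in atil..btil, f y * K y = ∫ y, f y * K y := by
  rw [intervalIntegral.integral_of_le (by linarith)]
  refine setIntegral_eq_integral_of_forall_compl_eq_zero ?_
  intro x hx
  have : aK ≤ |x| := by
    by_contra hc
    push Not at hc
    exact hx ⟨by linarith [(abs_lt.1 hc).1], by linarith [(abs_lt.1 hc).2]⟩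
  rw [hKsupp x this, mul_zero]

theorem aux_repro (M : ℕ) (P : ℕ → Polynomial ℝ)
    (hdeg : ∀ k ≤ M, (P k).degree = (k : ℕ)) (T : Polynomial ℝ →ₗ[ℝ] ℝ)
    (hT : ∀ k ≤ M, T (P k) = (P k).eval 0) :
    ∀ n, n ≤ M + 1 → ∀ q : Polynomial ℝ, q.degree < (n : ℕ) → T q = q.eval 0 := by
  intro n
  induction n with
  | zero =>
    intro _ q hq
    have : q = 0 := by
      ext m
      exact (Polynomial.degree_lt_iff_coeff_zero q 0).1 hq m (Nat.zero_le _)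
    simp [this]
  | succ n ih =>
    intro hn q hq
    have hnM : n ≤ M := by omega
    have hc : (P n).coeff n ≠ 0 := Polynomial.coeff_ne_zero_of_eq_degree (hdeg n hnM)
    set c := q.coeff n / (P n).coeff n with hcdef
    have h := ih (by omega) (q - c • P n) (by
      rw [Polynomial.degree_lt_iff_coeff_zero] at hq ⊢
      intro m hm
      rw [coeff_sub, coeff_smul, smul_eq_mul]
      rcases hm.eq_or_lt with rfl | hlt
      · rw [hcdef, div_mul_cancel₀ _ hc, sub_self]
      · rw [hq m hlt, Polynomial.coeff_eq_zero_of_degree_lt (n := m) (p := P n)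
          (by rw [hdeg n hnM]; exact_mod_cast hlt)]
        simp)
    rw [map_sub, map_smul, hT n hnM, eval_sub, eval_smul] at h
    linarith

/-- The step-taper effective kernel `K_eff(u) = ∑_{k=0}^{M} P_k(0) P_k(-u) K(-u)` built
from orthonormal polynomials with exact degrees, parity and `P_0 ≡ 1`, for an even
integrable kernel `K` vanishing outside `(-a_K, a_K) ⊆ [ã, b̃]`, has moments
`μ_0 = 1`, `μ_j = 0` for `1 ≤ j ≤ M`, and also `μ_{M+1} = 0` when `M` is even; hence it
is a high-order kernel of order `M+1` (`M` odd) or `M+2` (`M` even). -/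
theorem stmt_9 (aK atil btil : ℝ) (haK : 0 < aK) (ha : atil ≤ -aK) (hb : aK ≤ btil)
    (K : ℝ → ℝ) (hKeven : ∀ u, K (-u) = K u) (hKint : Integrable K)
    (hKsupp : ∀ u, aK ≤ |u| → K u = 0)
    (M : ℕ) (P : ℕ → Polynomial ℝ)
    (hdeg : ∀ k ≤ M, (P k).degree = (k : ℕ))
    (hP0 : P 0 = 1)
    (hpar : ∀ k ≤ M, ∀ u : ℝ, (P k).eval (-u) = (-1) ^ k * (P k).eval u)
    (horth : ∀ j ≤ M, ∀ k ≤ M,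
      ∫ y in atil..btil, (P j).eval y * (P k).eval y * K y
        = if j = k then (1:ℝ) else 0) :
    let Keff : ℝ → ℝ := fun u =>
      ∑ k ∈ Finset.range (M + 1), (P k).eval 0 * (P k).eval (-u) * K (-u)
    (∫ u, Keff u) = 1 ∧
    (∀ j : ℕ, 1 ≤ j → j ≤ M → ∫ u, u ^ j * Keff u = 0) ∧
    (Even M → ∫ u, u ^ (M + 1) * Keff u = 0) := by
  intro Keff
  have hI := aux_integrable aK K hKint hKsupp
  let L : Polynomial ℝ →ₗ[ℝ] ℝ :=
    { toFun := fun q => ∫ y, q.eval y * K y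
      map_add' := by
        intro p q
        rw [← integral_add (hI p) (hI q)]
        simp only [eval_add, add_mul]
      map_smul' := by
        intro c p
        simp only [eval_smul, smul_eq_mul, mul_assoc, RingHom.id_apply]
        rw [integral_const_mul] }
  have hL : ∀ q, L q = ∫ y, q.eval y * K y := fun q => rfl
  let T : Polynomial ℝ →ₗ[ℝ] ℝ :=
    ∑ k ∈ Finset.range (M + 1), (P k).eval 0 • (L ∘ₗ LinearMap.mulRight ℝ (P k))
  have hTv : ∀ q, T q = ∑ k ∈ Finset.range (M + 1), (P k).eval 0 * L (q * P k) := by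
    intro q
    simp [T, LinearMap.sum_apply]
  have hLorth : ∀ j ≤ M, ∀ k ≤ M, L (P j * P k) = if j = k then (1:ℝ) else 0 := by
    intro j hj k hk
    rw [← horth j hj k hk, hL]
    rw [aux_interval aK atil btil haK ha hb K hKsupp (fun y => (P j).eval y * (P k).eval y)]
    simp only [eval_mul]
  have hT : ∀ k ≤ M, T (P k) = (P k).eval 0 := by
    intro k hk
    rw [hTv, Finset.sum_eq_single k]
    · rw [hLorth k hk k hk]; simp
    · intro b hb' hne
      rw [hLorth k hk b (by have := Finset.mem_range.1 hb'; omega), if_neg (Ne.symm hne), mul_zero]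
    · intro h
      exact absurd (Finset.mem_range.2 (by omega)) h
  have hrep := aux_repro M P hdeg T hT (M + 1) le_rfl
  have hKeven' : ∀ u, Keff (-u) = Keff u := by
    intro u
    refine Finset.sum_congr rfl ?_
    intro k hk
    have hkM : k ≤ M := by have := Finset.mem_range.1 hk; omega
    rw [neg_neg, hpar k hkM u, hKeven u]
    rcases Nat.even_or_odd k with he | ho
    · rw [he.neg_one_pow, one_mul]
    · have h0 := hpar k hkM 0
      rw [ho.neg_one_pow, neg_zero] at h0
      have : (P k).eval 0 = 0 := by linarith
      rw [this]; ring
  have hmom : ∀ j : ℕ, ∫ u, u ^ j * Keff u = T ((X : Polynomial ℝ) ^ j) := by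
    intro j
    rw [hTv]
    simp only [hL, ← integral_const_mul]
    rw [← integral_finset_sum _ (fun k _ => (hI _).const_mul _)]
    congr 1
    ext u
    rw [← hKeven' u]
    simp only [Keff, Finset.mul_sum, neg_neg, eval_mul, eval_pow, eval_X]
    refine Finset.sum_congr rfl fun k _ => ?_
    ring
  have hmom' : ∀ j ≤ M, ∫ u, u ^ j * Keff u = (0:ℝ) ^ j := by
    intro j hj
    rw [hmom, hrep _ (by rw [degree_X_pow]; exact_mod_cast Nat.lt_succ_of_le hj)]
    simp
  refine ⟨?_, ?_, ?_⟩
  · simpa using hmom' 0 (Nat.zero_le _)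
  · intro j h1 hj
    rw [hmom' j hj, zero_pow (by omega)]
  · intro hM
    have h := integral_neg_eq_self (fun u => u ^ (M + 1) * Keff u) volume
    have hodd : Odd (M + 1) := hM.add_one
    simp only [hKeven', hodd.neg_pow, neg_mul] at h
    rw [integral_neg] at h
    linarith
end

section
/- Let a < b be real numbers, x_fit ∈ ℝ, n ≥ 1, x_1,…,x_n ∈ ℝ a sample, M ∈ ℕ, and L_0,…,L_M real polynomials. Let K : ℝ → ℝ be continuous at 0 with K(0) > 0. For each h > 0, define the rescaled polynomials P̃_k^h(y) = √(2h/((b−a)K(0))) · L_k((2yh + 2x_fit − a − b)/(b−a)) and the LOrPE estimate f̂_h(x) = (1/(n h)) ∑_{i=1}^{n} ∑_{k=0}^{M} P̃_k^h((x − x_fit)/h) · P̃_k^h((x_i − x_fit)/h) · K((x_i − x_fit)/h). Then for every x ∈ ℝ, as h → ∞, f̂_h(x) converges to (1/n) ∑_{i=1}^{n} ∑_{k=0}^{M} φ_k(x) φ_k(x_i), where φ_k(x) = √(2/(b−a)) · L_k((2x − a − b)/(b−a)); that is, in the large-bandwidth limit LOrPE reduces to the classical orthogonal series density estimate with the affinely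 rescaled basis φ_k on [a, b]. -/
open Polynomial Finset Filter

/-- In the large-bandwidth limit `h → ∞`, the LOrPE estimate built from the rescaled
polynomials `P̃_k^h(y) = √(2h/((b-a)K(0))) L_k((2yh + 2x_fit - a - b)/(b-a))` converges,
at every point `x`, to the classical orthogonal series density estimate with the affinely
rescaled basis `φ_k(x) = √(2/(b-a)) L_k((2x - a - b)/(b-a))` on `[a, b]`. -/
theorem stmt_10 (a b : ℝ) (hab : a < b) (xfit : ℝ) (n : ℕ) (hn : 1 ≤ n)
    (x : Fin n → ℝ) (M : ℕ) (L : ℕ → Polynomial ℝ) (K : ℝ → ℝ)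
    (hK0 : 0 < K 0) (hKcont : ContinuousAt K 0) (z : ℝ) :
    let Ptil : ℝ → ℕ → ℝ → ℝ := fun h k y =>
      Real.sqrt (2 * h / ((b - a) * K 0))
        * (L k).eval ((2 * y * h + 2 * xfit - a - b) / (b - a))
    let fhat : ℝ → ℝ := fun h =>
      (1 / (n * h)) * ∑ i, ∑ k ∈ Finset.range (M + 1),
        Ptil h k ((z - xfit) / h) * Ptil h k ((x i - xfit) / h)
          * K ((x i - xfit) / h)
    let φ : ℕ → ℝ → ℝ := fun k y =>
      Real.sqrt (2 / (b - a)) * (L k).eval ((2 * y - a - b) / (b - a))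
    Tendsto fhat atTop
      (nhds ((1 / n) * ∑ i, ∑ k ∈ Finset.range (M + 1), φ k z * φ k (x i))) := by
  intro Ptil fhat φ
  have hba : 0 < b - a := sub_pos.mpr hab
  have hn' : (n : ℝ) ≠ 0 := by
    have : n ≠ 0 := by omega
    exact_mod_cast this
  have key : ∀ h : ℝ, 0 < h → fhat h = (1 / n) * ∑ i, ∑ k ∈ Finset.range (M + 1),
      φ k z * φ k (x i) * (K ((x i - xfit) / h) / K 0) := by
    intro h hh
    simp only [fhat, Finset.mul_sum]
    refine Finset.sum_congr rfl fun i _ => Finset.sum_congr rfl fun k _ => ?_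
    have arg : ∀ y : ℝ, 2 * ((y - xfit) / h) * h + 2 * xfit - a - b = 2 * y - a - b := by
      intro y
      field_simp
      ring
    simp only [Ptil, φ, arg]
    have s1 : Real.sqrt (2 * h / ((b - a) * K 0)) * Real.sqrt (2 * h / ((b - a) * K 0))
        = 2 * h / ((b - a) * K 0) := Real.mul_self_sqrt (by positivity)
    have s2 : Real.sqrt (2 / (b - a)) * Real.sqrt (2 / (b - a)) = 2 / (b - a) :=
      Real.mul_self_sqrt (by positivity)
    generalize eval ((2 * z - a - b) / (b - a)) (L k) = p
    generalize eval ((2 * x i - a - b) / (b - a)) (L k) = q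
    generalize K ((x i - xfit) / h) = r
    generalize Real.sqrt (2 * h / ((b - a) * K 0)) = u at *
    generalize Real.sqrt (2 / (b - a)) = v at *
    have e1 : 1 / (n * h) * (u * p * (u * q) * r) = 1 / (n * h) * ((u * u) * (p * q * r)) := by
      ring
    have e2 : 1 / n * (v * p * (v * q) * (r / K 0)) = 1 / n * ((v * v) * (p * q * (r / K 0))) := by
      ring
    rw [e1, e2, s1, s2]
    field_simp
  have hlim : Tendsto (fun h : ℝ => (1 / n) * ∑ i, ∑ k ∈ Finset.range (M + 1),
      φ k z * φ k (x i) * (K ((x i - xfit) / h) / K 0)) atTop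
      (nhds ((1 / n) * ∑ i, ∑ k ∈ Finset.range (M + 1), φ k z * φ k (x i))) := by
    refine Tendsto.const_mul _ (tendsto_finsetSum _ fun i _ => tendsto_finsetSum _ fun k _ => ?_)
    have h0 : Tendsto (fun h : ℝ => (x i - xfit) / h) atTop (nhds 0) :=
      tendsto_const_nhds.div_atTop tendsto_id
    have h1 : Tendsto (fun h : ℝ => K ((x i - xfit) / h)) atTop (nhds (K 0)) :=
      hKcont.tendsto.comp h0
    have h2 := (h1.div_const (K 0)).const_mul (φ k z * φ k (x i))
    rwa [div_self hK0.ne', mul_one] at h2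
  refine hlim.congr' ?_
  filter_upwards [eventually_gt_atTop 0] with h hh
  exact (key h hh).symm
end
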